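/- arXiv:1611.01313 — 3 statements merged into one kernel-verified Lean document; each statement's English description precedes it below -/
import Mathlib

section
/- Let F be a free group and R, S, T normal subgroups of F with R ⊆ T. Then, inside ℤ[F], Δ(R)Δ(S)Δ(T) ∩ Δ(R)Δ(R∩S) = Δ(R)Δ(R∩S)Δ(R) + Δ(R)Δ(R ∩ (S∩T)'), where (S∩T)' is the derived subgroup of S∩T. -/
/-! Group-ring preliminaries: for a subgroup `N` of `F`, `aug N` is the additive
subgroup `Δ(N)` of `ℤ[F]` generated by `{n - 1 : n ∈ N}`, and `augI N = Δ(N)ℤ[F]`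
is the corresponding (for normal `N` two-sided) ideal of `ℤ[F]`.  Products of
submodules are additive spans of products, as in the paper. -/

/-- the augmentation ideal `Δ(N)` of a subgroup `N ≤ F`, inside `ℤ[F]` -/
noncomputable def aug {F : Type} [Group F] (N : Subgroup F) :
    Submodule ℤ (MonoidAlgebra ℤ F) :=
  Submodule.span ℤ {x | ∃ n ∈ N, x = (MonoidAlgebra.of ℤ F n) - 1}

/-- the ideal `𝐧 = Δ(N)ℤ[F]` of `ℤ[F]` -/
noncomputable def augI {F : Type} [Group F] (N : Subgroup F) :
    Submodule ℤ (MonoidAlgebra ℤ F) :=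
  aug N * ⊤

/-!
The Fox calculus makes `Δ(R)ℤ[F]` a free right `ℤ[F]`-module on the `x - 1`, for `x` in a basis of
the free group `R`; hence `Δ(R)A ∩ Δ(R)B = Δ(R)(A ∩ B)` as soon as `A` and `B` are stable under left
multiplication by `R`. Put `N = R ∩ S`. Both `Δ(S)Δ(T)` and `Δ(N) + Δ(N)Δ(R)` are stable, and
`Δ(R)` times the latter is `Δ(R)Δ(N)`, so that one may strip the factor `Δ(R)` and compute
`Δ(S)Δ(T) ∩ (Δ(N) + Δ(N)Δ(R))`. As `Δ(N)Δ(R) ⊆ Δ(S)Δ(T)`, modularity leaves `Δ(S)Δ(T) ∩ Δ(N)`.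
Elements of `Δ(N)` have the form `n - 1` modulo `Δ(N)²`, and `n - 1 ∈ Δ(S)Δ(T)` exactly when
`n ∈ (S ∩ T)'`.
-/

open MonoidAlgebra

section GroupTheory

variable {G : Type*} [Group G]

theorem exists_left_equivariant (H : Subgroup G) :
    ∃ u : G → H, u 1 = 1 ∧ ∀ (h : H) (g : G), u (h * g) = h * u g := by
  obtain ⟨X, hX, hX1⟩ := H.exists_isComplement_right 1
  refine ⟨fun g => (hX.equiv g).1, ?_, fun h g => congrArg Prod.fst (hX.equiv_mul_left h g)⟩
  simp [hX.equiv_one H.one_mem hX1]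

theorem exists_retraction_inf (S T : Subgroup G) :
    ∃ θ : G → ↥(S ⊓ T), (∀ m : ↥(S ⊓ T), θ m = m) ∧
      ∀ s ∈ S, ∀ t ∈ T, θ (s * t) = θ s * θ t := by
  obtain ⟨u, hu_one, hu⟩ := exists_left_equivariant (S ⊓ T)
  let v : G → ↥(S ⊓ T) := fun g => (u g⁻¹)⁻¹
  have hv_one : v 1 = 1 := by simp [v, hu_one]
  have hv (g : G) (m : ↥(S ⊓ T)) : v (g * m) = v g * m := by
    simp only [v, mul_inv_rev, ← Subgroup.coe_inv, hu, inv_inv]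
  have well_defined (g : G) : ∃ x, ∀ s ∈ S, ∀ t ∈ T, s * t = g → x = v s * u t := by
    by_cases hg : ∃ s ∈ S, ∃ t ∈ T, s * t = g
    · obtain ⟨s, hs, t, ht, rfl⟩ := hg
      refine ⟨v s * u t, fun s' hs' t' ht' h => ?_⟩
      have h' : s⁻¹ * s' = t * t'⁻¹ := by
        rw [eq_mul_inv_iff_mul_eq, mul_assoc, h, inv_mul_cancel_left]
      let m : ↥(S ⊓ T) := ⟨s⁻¹ * s', S.mul_mem (S.inv_mem hs) hs',
        h' ▸ T.mul_mem ht (T.inv_mem ht')⟩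
      have hs_eq : s' = s * m := by simp [m]
      have ht_eq : t = m * t' := by simp [m, h']
      rw [hs_eq, ht_eq, hv, hu, mul_assoc]
    · exact ⟨1, fun s hs t ht h => (hg ⟨s, hs, t, ht, h⟩).elim⟩
  choose θ hθ using well_defined
  have hθ_left (s : G) (hs : s ∈ S) : θ s = v s := by
    simpa [hu_one] using hθ s s hs 1 T.one_mem (mul_one s)
  have hθ_right (t : G) (ht : t ∈ T) : θ t = u t := by
    simpa [hv_one] using hθ t 1 S.one_mem t ht (one_mul t)
  refine ⟨θ, fun m => ?_, fun s hs t ht => ?_⟩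
  · simpa [hv_one, hθ_left m m.2.1] using hv 1 m
  · rw [hθ _ s hs t ht rfl, hθ_left s hs, hθ_right t ht]

theorem closure_range_freeGroupBasis {ι : Type*} (b : FreeGroupBasis ι G) :
    Subgroup.closure (Set.range b) = ⊤ := by
  have h := congrArg (Subgroup.map b.repr.symm.toMonoidHom) (FreeGroup.closure_range_of ι)
  rwa [MonoidHom.map_closure, ← Set.range_comp,
    Subgroup.map_top_of_surjective _ b.repr.symm.surjective] at h

/-- `D` is a discrete primitive of `w` along the Cayley graph of `R` acting on `G`. -/
theorem exists_map_freeGroupBasis_mul {R : Subgroup G} {ι V : Type*} [AddCommGroup V]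
    (b : FreeGroupBasis ι R) (w : ι → G → V) :
    ∃ D : G → V, ∀ i g, D (b i * g) = D g + w i g := by
  obtain ⟨u, -, hu⟩ := exists_left_equivariant R
  let φ : R →* Equiv.Perm (G → V) := b.lift fun i =>
    (Equiv.mulLeft (b i : G)).arrowCongr (Equiv.refl V) * Equiv.addRight (w i)
  refine ⟨fun g => φ (u g) 0 g, fun i g => ?_⟩
  have hφ : φ (b i) = (Equiv.mulLeft (b i : G)).arrowCongr (Equiv.refl V) * Equiv.addRight (w i) :=
    congrFun (b.lift.symm_apply_apply _) i
  simp [hu, hφ]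

end GroupTheory

section Augmentation

variable {F : Type} [Group F] {H K : Subgroup F}

theorem of_sub_one_mem_aug {h : F} (hh : h ∈ H) : of ℤ F h - 1 ∈ aug H :=
  Submodule.subset_span ⟨h, hh, rfl⟩

theorem aug_le_iff {P : Submodule ℤ (MonoidAlgebra ℤ F)} :
    aug H ≤ P ↔ ∀ h ∈ H, of ℤ F h - 1 ∈ P := by
  refine ⟨fun hP h hh => hP (of_sub_one_mem_aug hh), fun hP => Submodule.span_le.2 ?_⟩
  rintro _ ⟨h, hh, rfl⟩
  exact hP h hh

theorem aug_mul_le_iff {A P : Submodule ℤ (MonoidAlgebra ℤ F)} :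
    aug H * A ≤ P ↔ ∀ h ∈ H, ∀ a ∈ A, (of ℤ F h - 1) * a ∈ P := by
  refine ⟨fun hP h hh a ha => hP (Submodule.mul_mem_mul (of_sub_one_mem_aug hh) ha),
    fun hP => Submodule.mul_le.2 fun x hx a ha => ?_⟩
  have hle : aug H ≤ P.comap (LinearMap.mulRight ℤ a) := aug_le_iff.2 fun h hh => hP h hh a ha
  exact hle hx

theorem aug_mul_aug_le_iff {P : Submodule ℤ (MonoidAlgebra ℤ F)} :
    aug H * aug K ≤ P ↔ ∀ h ∈ H, ∀ k ∈ K, (of ℤ F h - 1) * (of ℤ F k - 1) ∈ P := by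
  rw [aug_mul_le_iff]
  refine forall₂_congr fun h _ => ?_
  exact aug_le_iff (P := P.comap (LinearMap.mulLeft ℤ (of ℤ F h - 1)))

theorem aug_mono (hHK : H ≤ K) : aug H ≤ aug K :=
  aug_le_iff.2 fun _ hh => of_sub_one_mem_aug (hHK hh)

theorem aug_mul_aug_self_le (H : Subgroup F) : aug H * aug H ≤ aug H := by
  refine aug_mul_aug_le_iff.2 fun h hh k hk => ?_
  have key : (of ℤ F h - 1) * (of ℤ F k - 1) =
      (of ℤ F (h * k) - 1) - (of ℤ F h - 1) - (of ℤ F k - 1) := by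
    rw [map_mul]; noncomm_ring
  rw [key]
  exact sub_mem (sub_mem (of_sub_one_mem_aug (H.mul_mem hh hk)) (of_sub_one_mem_aug hh))
    (of_sub_one_mem_aug hk)

theorem of_sub_one_mul_of_sub_one (h k : F) :
    (of ℤ F h - 1) * (of ℤ F k - 1) = (of ℤ F (h * k * h⁻¹) - 1) * (of ℤ F h - 1) +
      ((of ℤ F (h * k * h⁻¹) - 1) - (of ℤ F k - 1)) := by
  have hmul : of ℤ F (h * k * h⁻¹) * of ℤ F h = of ℤ F h * of ℤ F k := by
    simp only [← map_mul, inv_mul_cancel_right]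
  simp only [sub_mul, mul_sub, hmul]
  noncomm_ring

/-- Both sides are `Δ(K)ℤ[H]`. -/
theorem aug_mul_aug_add_aug_comm (hHK : H ≤ Subgroup.normalizer K) :
    aug H * aug K + aug K = aug K * aug H + aug K := by
  apply le_antisymm <;> refine sup_le (aug_mul_aug_le_iff.2 ?_) le_sup_right
  · intro h hh k hk
    have hconj : h * k * h⁻¹ ∈ K := (Subgroup.mem_normalizer_iff.1 (hHK hh) k).1 hk
    rw [of_sub_one_mul_of_sub_one]
    exact Submodule.add_mem_sup
      (Submodule.mul_mem_mul (of_sub_one_mem_aug hconj) (of_sub_one_mem_aug hh))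
      (sub_mem (of_sub_one_mem_aug hconj) (of_sub_one_mem_aug hk))
  · intro k hk h hh
    have hconj : h⁻¹ * k * h ∈ K := (Subgroup.mem_normalizer_iff''.1 (hHK hh) k).1 hk
    have key := of_sub_one_mul_of_sub_one h (h⁻¹ * k * h)
    rw [show h * (h⁻¹ * k * h) * h⁻¹ = k by group, ← sub_eq_iff_eq_add, sub_eq_add_neg] at key
    rw [← key]
    exact Submodule.add_mem_sup
      (Submodule.mul_mem_mul (of_sub_one_mem_aug hh) (of_sub_one_mem_aug hconj))
      (neg_mem (sub_mem (of_sub_one_mem_aug hk) (of_sub_one_mem_aug hconj)))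

theorem aug_mul_aug_mul_add_self (H : Subgroup F) (A : Submodule ℤ (MonoidAlgebra ℤ F)) :
    aug H * (aug H * A + A) = aug H * A := by
  rw [mul_add, ← mul_assoc]
  exact sup_of_le_right (mul_le_mul_left (aug_mul_aug_self_le H) A)

theorem aug_mul_aug_mul_aug_le {S T : Subgroup F} (hHS : H ≤ Subgroup.normalizer S) (hHT : H ≤ T) :
    aug H * (aug S * aug T) ≤ aug S * aug T :=
  calc aug H * (aug S * aug T)
    _ = aug H * aug S * aug T := (mul_assoc _ _ _).symm
    _ ≤ (aug S * aug H + aug S) * aug T :=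
      mul_le_mul_left (le_sup_left.trans (aug_mul_aug_add_aug_comm hHS).le) _
    _ = aug S * (aug H * aug T) + aug S * aug T := by rw [add_mul, mul_assoc]
    _ ≤ aug S * aug T := sup_le (mul_le_mul_right
      ((mul_le_mul_left (aug_mono hHT) _).trans (aug_mul_aug_self_le T)) _) le_rfl

end Augmentation

section DerivedSubgroup

variable {F : Type} [Group F]

/-- The homomorphism `n ↦ n - 1` from `N` to `ℤ[F] / Δ(N)²`; its image is `Δ(N) / Δ(N)²`. -/
noncomputable def augQuotientHom (N : Subgroup F) :
    N →* Multiplicative (MonoidAlgebra ℤ F ⧸ (aug N * aug N)) where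
  toFun n := .ofAdd ((aug N * aug N).mkQ (of ℤ F n - 1))
  map_one' := by simp only [Subgroup.coe_one, map_one, sub_self, map_zero, ofAdd_zero]
  map_mul' m n := by
    rw [← ofAdd_add, ← map_add]
    refine congrArg Multiplicative.ofAdd ((Submodule.Quotient.eq _).2 ?_)
    have key : of ℤ F ↑(m * n) - 1 - ((of ℤ F m - 1) + (of ℤ F n - 1)) =
        (of ℤ F m - 1) * (of ℤ F n - 1) := by
      rw [Subgroup.coe_mul, map_mul]; noncomm_ring
    rw [key]
    exact Submodule.mul_mem_mul (of_sub_one_mem_aug m.2) (of_sub_one_mem_aug n.2)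

theorem aug_commutator_le (N : Subgroup F) : aug ⁅N, N⁆ ≤ aug N * aug N := by
  refine aug_le_iff.2 fun n hn => ?_
  rw [← Subgroup.map_subtype_commutator] at hn
  obtain ⟨m, hm, rfl⟩ := hn
  have hker : augQuotientHom N m = 1 := Abelianization.commutator_subset_ker (augQuotientHom N) hm
  exact (Submodule.Quotient.mk_eq_zero _).1 hker

theorem exists_sub_of_sub_one_mem {N : Subgroup F} {x : MonoidAlgebra ℤ F} (hx : x ∈ aug N) :
    ∃ n ∈ N, x - (of ℤ F n - 1) ∈ aug N * aug N := by
  have hrange : aug N ≤ (AddSubgroup.toIntSubmodule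
      (augQuotientHom N).range.toAddSubgroup').comap (aug N * aug N).mkQ :=
    aug_le_iff.2 fun n hn => ⟨⟨n, hn⟩, rfl⟩
  obtain ⟨n, hn⟩ := hrange hx
  exact ⟨n, n.2, (Submodule.Quotient.eq _).1 hn.symm⟩

theorem mem_commutator_of_sub_one_mem {S T : Subgroup F} {n : F} (hn : n ∈ S ⊓ T)
    (h : of ℤ F n - 1 ∈ aug S * aug T) : n ∈ ⁅S ⊓ T, S ⊓ T⁆ := by
  obtain ⟨θ, hθ_id, hθ_mul⟩ := exists_retraction_inf S T
  let L : MonoidAlgebra ℤ F →ₗ[ℤ] Additive (Abelianization ↥(S ⊓ T)) :=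
    (basis F ℤ).constr ℤ fun f => .ofMul (Abelianization.of (θ f))
  have hL (f : F) : L (of ℤ F f) = .ofMul (Abelianization.of (θ f)) :=
    (basis F ℤ).constr_basis ℤ _ f
  have hθ_one : θ 1 = 1 := hθ_id 1
  have hL_one : L 1 = 0 := by
    rw [← map_one (of ℤ F), hL, hθ_one, map_one, ofMul_one]
  have hker : aug S * aug T ≤ LinearMap.ker L := by
    refine aug_mul_aug_le_iff.2 fun s hs t ht => ?_
    have hLst : L (of ℤ F s * of ℤ F t) = L (of ℤ F s) + L (of ℤ F t) := by
      rw [← map_mul, hL, hL, hL, hθ_mul s hs t ht, map_mul, ofMul_mul]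
    rw [LinearMap.mem_ker, sub_mul, one_mul, mul_sub, mul_one, map_sub, map_sub, map_sub, hLst,
      hL_one]
    abel
  have hn_one : Abelianization.of (⟨n, hn⟩ : ↥(S ⊓ T)) = 1 := by
    have hLn := LinearMap.mem_ker.1 (hker h)
    rwa [map_sub, hL, hL_one, sub_zero, hθ_id ⟨n, hn⟩, ofMul_eq_zero] at hLn
  rw [← Subgroup.map_subtype_commutator, ← Abelianization.ker_of]
  exact ⟨⟨n, hn⟩, hn_one, rfl⟩

theorem aug_mul_aug_inf_aug {N S T : Subgroup F} (hN : N ≤ S ⊓ T) :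
    aug S * aug T ⊓ aug N = aug N * aug N + aug (N ⊓ ⁅S ⊓ T, S ⊓ T⁆) := by
  have hNN : aug N * aug N ≤ aug S * aug T :=
    mul_le_mul' (aug_mono (hN.trans inf_le_left)) (aug_mono (hN.trans inf_le_right))
  apply le_antisymm
  · rintro x ⟨hxST, hxN⟩
    obtain ⟨n, hn, hxn⟩ := exists_sub_of_sub_one_mem hxN
    have hnST : of ℤ F n - 1 ∈ aug S * aug T := by
      simpa using sub_mem hxST (hNN hxn)
    have hn' : n ∈ N ⊓ ⁅S ⊓ T, S ⊓ T⁆ := ⟨hn, mem_commutator_of_sub_one_mem (hN hn) hnST⟩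
    simpa using Submodule.add_mem_sup hxn (of_sub_one_mem_aug hn')
  · refine sup_le (le_inf hNN (aug_mul_aug_self_le N)) (le_inf ?_ (aug_mono inf_le_left))
    calc aug (N ⊓ ⁅S ⊓ T, S ⊓ T⁆) ≤ aug ⁅S ⊓ T, S ⊓ T⁆ := aug_mono inf_le_right
      _ ≤ aug (S ⊓ T) * aug (S ⊓ T) := aug_commutator_le _
      _ ≤ aug S * aug T := mul_le_mul' (aug_mono inf_le_left) (aug_mono inf_le_right)

end DerivedSubgroup

section Freeness

variable {F : Type} [Group F] {R : Subgroup F} {ι : Type*}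
  {A B : Submodule ℤ (MonoidAlgebra ℤ F)}

/-- The map `c ↦ ∑ i, (x i - 1) * c i`. For a basis `x` of a free subgroup `R`, its inverse on
`Δ(R)ℤ[F]` is given by the (right) Fox derivatives. -/
noncomputable def foxSum (x : ι → F) : (ι →₀ MonoidAlgebra ℤ F) →ₗ[ℤ] MonoidAlgebra ℤ F :=
  Finsupp.lsum ℤ fun i => LinearMap.mulLeft ℤ (of ℤ F (x i) - 1)

theorem foxSum_single (x : ι → F) (i : ι) (c : MonoidAlgebra ℤ F) :
    foxSum x (Finsupp.single i c) = (of ℤ F (x i) - 1) * c := by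
  simp [foxSum]

theorem foxSum_injective (b : FreeGroupBasis ι R) :
    Function.Injective (foxSum fun i => (b i : F)) := by
  obtain ⟨D, hD⟩ := exists_map_freeGroupBasis_mul b fun i f => Finsupp.single i (of ℤ F f)
  let L : MonoidAlgebra ℤ F →ₗ[ℤ] ι →₀ MonoidAlgebra ℤ F := (basis F ℤ).constr ℤ D
  have hL (f : F) : L (of ℤ F f) = D f := (basis F ℤ).constr_basis ℤ D f
  have hLfox : L ∘ₗ foxSum (fun i => (b i : F)) = LinearMap.id := by
    refine Finsupp.lhom_ext' fun i => (basis F ℤ).ext fun f => ?_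
    change L (foxSum _ (Finsupp.single i (of ℤ F f))) = Finsupp.single i (of ℤ F f)
    rw [foxSum_single, sub_mul, one_mul, ← map_mul, map_sub, hL, hL, hD, add_sub_cancel_left]
  exact Function.LeftInverse.injective (g := L) (DFunLike.congr_fun hLfox)

theorem of_mul_mem_of_aug_mul_le (hA : aug R * A ≤ A) {r : F} (hr : r ∈ R)
    {a : MonoidAlgebra ℤ F} (ha : a ∈ A) : of ℤ F r * a ∈ A := by
  simpa [sub_mul] using add_mem (aug_mul_le_iff.1 hA r hr a ha) ha

theorem aug_closure_mul_le {X : Set F} (hA : aug (Subgroup.closure X) * A ≤ A)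
    (h : ∀ x ∈ X, ∀ a ∈ A, (of ℤ F x - 1) * a ∈ B) : aug (Subgroup.closure X) * A ≤ B := by
  refine aug_mul_le_iff.2 fun r hr => ?_
  induction hr using Subgroup.closure_induction with
  | mem x hx => exact h x hx
  | one => simp [map_one, -of_apply]
  | mul u v _ hv ihu ihv =>
    intro a ha
    have key : (of ℤ F (u * v) - 1) * a =
        (of ℤ F u - 1) * (of ℤ F v * a) + (of ℤ F v - 1) * a := by
      rw [map_mul]; noncomm_ring
    rw [key]
    exact add_mem (ihu _ (of_mul_mem_of_aug_mul_le hA hv ha)) (ihv a ha)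
  | inv u hu ihu =>
    intro a ha
    have key : (of ℤ F u⁻¹ - 1) * a = -((of ℤ F u - 1) * (of ℤ F u⁻¹ * a)) := by
      rw [sub_mul _ _ (_ * a), ← mul_assoc, ← map_mul, mul_inv_cancel, map_one]
      noncomm_ring
    rw [key]
    exact neg_mem (ihu _ (of_mul_mem_of_aug_mul_le hA (inv_mem hu) ha))

theorem map_foxSum_submodule (b : FreeGroupBasis ι R) (hA : aug R * A ≤ A) :
    (Finsupp.submodule fun _ => A).map (foxSum fun i => (b i : F)) = aug R * A := by
  have hR : Subgroup.closure (Set.range fun i => (b i : F)) = R := by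
    have h := congrArg (Subgroup.map R.subtype) (closure_range_freeGroupBasis b)
    rwa [MonoidHom.map_closure, ← Set.range_comp, ← MonoidHom.range_eq_map, R.range_subtype] at h
  apply le_antisymm
  · rw [Finsupp.submodule_eq_iSup, Submodule.map_iSup, iSup_le_iff]
    rintro i _ ⟨_, ⟨a, ha, rfl⟩, rfl⟩
    rw [Finsupp.lsingle_apply, foxSum_single]
    exact Submodule.mul_mem_mul (of_sub_one_mem_aug (b i).2) ha
  · rw [← hR] at hA
    nth_rewrite 1 [← hR]
    refine aug_closure_mul_le hA ?_
    rintro _ ⟨i, rfl⟩ a ha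
    rw [← foxSum_single (fun i => (b i : F))]
    refine Submodule.mem_map_of_mem ?_
    rw [Finsupp.submodule_eq_iSup]
    exact Submodule.mem_iSup_of_mem i (Submodule.mem_map_of_mem ha)

theorem aug_mul_inf [IsFreeGroup R] (hA : aug R * A ≤ A) (hB : aug R * B ≤ B) :
    aug R * (A ⊓ B) = aug R * A ⊓ aug R * B := by
  let b := IsFreeGroup.basis R
  have hAB : aug R * (A ⊓ B) ≤ A ⊓ B :=
    le_inf ((mul_le_mul_right inf_le_left _).trans hA) ((mul_le_mul_right inf_le_right _).trans hB)
  have hsub : (Finsupp.submodule fun _ : IsFreeGroup.Generators R => A ⊓ B) =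
      (Finsupp.submodule fun _ => A) ⊓ Finsupp.submodule fun _ => B := by
    ext c
    simp [Finsupp.mem_submodule_iff, forall_and]
  rw [← map_foxSum_submodule b hA, ← map_foxSum_submodule b hB, ← map_foxSum_submodule b hAB, hsub,
    Submodule.map_inf _ (foxSum_injective b)]

end Freeness

theorem intersection_lemma_general {F : Type} [Group F] {R S T : Subgroup F} [IsFreeGroup R]
    (hRS : R ≤ Subgroup.normalizer S) (hRT : R ≤ T) :
    (aug R * aug S * aug T) ⊓ (aug R * aug (R ⊓ S)) =
      aug R * aug (R ⊓ S) * aug R + aug R * aug (R ⊓ ⁅S ⊓ T, S ⊓ T⁆) := by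
  let N := R ⊓ S
  have hRN : R ≤ Subgroup.normalizer N := Subgroup.le_normalizer_iff.2 fun r hr n hn =>
    ⟨R.mul_mem (R.mul_mem hr hn.1) (R.inv_mem hr), Subgroup.le_normalizer_iff.1 hRS r hr n hn.2⟩
  have hmul : aug R * (aug N * aug R + aug N) = aug R * aug N := by
    rw [← aug_mul_aug_add_aug_comm hRN, aug_mul_aug_mul_add_self]
  have hstable : aug R * (aug N * aug R + aug N) ≤ aug N * aug R + aug N :=
    hmul.le.trans (le_sup_left.trans (aug_mul_aug_add_aug_comm hRN).le)
  have hNR : aug N * aug R ≤ aug S * aug T := mul_le_mul' (aug_mono inf_le_right) (aug_mono hRT)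
  have hNN : aug N * aug N ≤ aug N * aug R := mul_le_mul_right (aug_mono inf_le_left) _
  have hderived : N ⊓ ⁅S ⊓ T, S ⊓ T⁆ = R ⊓ ⁅S ⊓ T, S ⊓ T⁆ := by
    rw [inf_assoc, inf_of_le_right ((Subgroup.commutator_le_self _).trans inf_le_left)]
  calc aug R * aug S * aug T ⊓ aug R * aug N
    _ = aug R * (aug S * aug T) ⊓ aug R * (aug N * aug R + aug N) := by rw [hmul, mul_assoc]
    _ = aug R * (aug S * aug T ⊓ (aug N * aug R + aug N)) :=
      (aug_mul_inf (aug_mul_aug_mul_aug_le hRS hRT) hstable).symm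
    _ = aug R * (aug N * aug R + aug S * aug T ⊓ aug N) := by
      rw [inf_comm, Submodule.add_eq_sup, sup_inf_assoc_of_le _ hNR, inf_comm, Submodule.add_eq_sup]
    _ = aug R * (aug N * aug R + aug (N ⊓ ⁅S ⊓ T, S ⊓ T⁆)) := by
      rw [aug_mul_aug_inf_aug (le_inf inf_le_right (inf_le_left.trans hRT)), ← add_assoc,
        Submodule.add_eq_sup (aug N * aug R), sup_of_le_left hNN]
    _ = aug R * aug N * aug R + aug R * aug (R ⊓ ⁅S ⊓ T, S ⊓ T⁆) := by
      rw [mul_add, mul_assoc, hderived]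

/-- Lemma 2.2: for normal subgroups `R ⊆ T`, `S` of a free group `F`,
`Δ(R)Δ(S)Δ(T) ∩ Δ(R)Δ(R∩S) = Δ(R)Δ(R∩S)Δ(R) + Δ(R)Δ(R ∩ (S∩T)')`. -/
theorem intersection_lemma (F : Type) [Group F] [IsFreeGroup F]
    (R S T : Subgroup F) [R.Normal] [S.Normal] [T.Normal] (hRT : R ≤ T) :
    (aug R * aug S * aug T) ⊓ (aug R * aug (R ⊓ S)) =
      aug R * aug (R ⊓ S) * aug R + aug R * aug (R ⊓ ⁅S ⊓ T, S ⊓ T⁆) := by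
  exact intersection_lemma_general Subgroup.le_normalizer_of_normal hRT
end

section
/- Let F be a free group and R a normal subgroup of F, with 𝐫 and 𝐟 the two-sided ideals of ℤ[F] generated by the augmentation ideals of R and F. If a ∈ D(F, 𝐟𝐫𝐟), then a² ∈ D(F, 𝐫𝐫𝐟 + 𝐟𝐫𝐫). -/
/-! Write `q` for the quotient map of `ℤ[F]` by `𝐫𝐫𝐟 + 𝐟𝐫𝐫`. For `m ∈ R` and `w ∈ F` the element
`κ(m, w) = q(m - w⁻¹mw)` is additive in `m` and a crossed homomorphism in `w`. Since `F` is free,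
such a `κ` can be integrated over the Cayley tree of `F`, to an additive map `H` on `ℤ[F]` with
`H(v(m - 1)(w - 1)) = κ(m, w)` for all `v`; in particular `H` vanishes on `𝐟𝐫𝐟`. On `𝐫𝐫` it is the
difference between the flip and the identity, `(m - 1)(n - 1) ↦ q((n - 1)(m - 1) - (m - 1)(n - 1))`,
and this makes `n ↦ H(n - 1) + q(n - n⁻¹)` a homomorphism on `R`. If `a - 1 ∈ 𝐟𝐫𝐟`, then
`a ∈ [R, R]`, so this homomorphism vanishes at `a`; as `H(a - 1) = 0`, we get `q(a) = q(a⁻¹)`,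
from which the theorem follows. -/

namespace Stohr

open MonoidAlgebra (of)
open Submodule (span)

section FreeGroup

variable {F : Type*} [Group F]

theorem closure_range_isFreeGroup_of [IsFreeGroup F] :
    Subgroup.closure (Set.range (IsFreeGroup.of : _ → F)) = ⊤ := by
  have hrange : Set.range (IsFreeGroup.of : _ → F) =
      (IsFreeGroup.mulEquiv F).toMonoidHom '' Set.range FreeGroup.of := Set.range_comp _ _
  rw [hrange, ← MonoidHom.map_closure, FreeGroup.closure_range_of]
  exact Subgroup.map_top_of_surjective _ (IsFreeGroup.mulEquiv F).surjective

-- The wreath product records the edge increments along the path from `1` to `v`.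
theorem exists_apply_mul_of_eq_add [IsFreeGroup F] {A : Type*} [AddGroup A]
    (θ : IsFreeGroup.Generators F → F → A) :
    ∃ h : F → A, ∀ x v, h (v * IsFreeGroup.of x) = h v + θ x v := by
  let L : F →* RegularWreathProduct (Multiplicative A) F :=
    IsFreeGroup.lift fun x ↦ ⟨fun u ↦ .ofAdd (θ x u⁻¹), IsFreeGroup.of x⟩
  have hL : RegularWreathProduct.rightHom.comp L = MonoidHom.id F :=
    IsFreeGroup.ext_hom fun x ↦ by simp [L]
  have hright (v : F) : (L v).right = v := DFunLike.congr_fun hL v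
  refine ⟨fun v ↦ ((L v).left 1).toAdd, fun x v ↦ ?_⟩
  simp [hright, L]

theorem exists_retraction_mul_right (R : Subgroup F) :
    ∃ ρ : F → R, ∀ v (m : R), ρ (v * m) = ρ v * m := by
  obtain ⟨S, hS, -⟩ := R.exists_isComplement_left 1
  exact ⟨fun v ↦ (hS.equiv v).2, fun v m ↦ congrArg Prod.snd (hS.equiv_mul_right v m)⟩

theorem exists_second_difference_eq [IsFreeGroup F] {R : Subgroup F} [R.Normal]
    {A : Type*} [AddCommGroup A] (κ : R → F → A)
    (hmul : ∀ m n w, κ (m * n) w = κ m w + κ n w)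
    (hcross : ∀ m v w, κ m (v * w) = κ m v + κ ((MulAut.conjNormal v).symm m) w) :
    ∃ h : F → A, ∀ w v (m : R), h (v * m * w) - h (v * m) - h (v * w) + h v = κ m w := by
  obtain ⟨ρ, hρ⟩ := exists_retraction_mul_right R
  obtain ⟨h, hh⟩ := exists_apply_mul_of_eq_add fun x v ↦ κ (ρ v) (IsFreeGroup.of x)
  have hone (m : R) : κ m 1 = 0 := by
    have := hcross m 1 1
    rwa [mul_one, map_one, left_eq_add] at this
  refine ⟨h, fun w ↦ ?_⟩
  have hw : w ∈ Subgroup.closure (Set.range IsFreeGroup.of) :=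
    closure_range_isFreeGroup_of (F := F) ▸ Subgroup.mem_top w
  induction hw using Subgroup.closure_induction with
  | mem _ hx =>
    obtain ⟨x, rfl⟩ := hx
    intro v m
    rw [hh, hh, hρ, hmul]
    abel
  | one => simp [hone]
  | mul w w' _ _ ihw ihw' =>
    intro v m
    have hconj : v * w * ((MulAut.conjNormal w).symm m : R) = v * m * w := by
      rw [MulAut.conjNormal_symm_apply]; group
    have hw' := ihw' (v * w) ((MulAut.conjNormal w).symm m)
    rw [hconj] at hw'
    rw [hcross, ← ihw, ← hw', ← mul_assoc, ← mul_assoc]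
    abel
  | inv w _ ihw =>
    intro v m
    have hconj : v * w⁻¹ * (MulAut.conjNormal w m : R) = v * m * w⁻¹ := by
      rw [MulAut.conjNormal_apply]; group
    have hinv : κ m w⁻¹ = -κ (MulAut.conjNormal w m) w := by
      have := hcross (MulAut.conjNormal w m) w w⁻¹
      rw [mul_inv_cancel, hone, MulEquiv.symm_apply_apply] at this
      exact eq_neg_of_add_eq_zero_right this.symm
    rw [hinv, ← ihw (v * w⁻¹), hconj, inv_mul_cancel_right, inv_mul_cancel_right]
    abel

end FreeGroup

section AugmentationIdeals

variable {F : Type} [Group F] (N : Subgroup F)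

theorem top_eq_span_range_of :
    (⊤ : Submodule ℤ (MonoidAlgebra ℤ F)) = span ℤ (Set.range (of ℤ F)) := by
  rw [← (MonoidAlgebra.basis F ℤ).span_eq]
  congr 2

theorem exists_linearMap_of {A : Type*} [AddCommGroup A] (φ : F → A) :
    ∃ H : MonoidAlgebra ℤ F →ₗ[ℤ] A, ∀ g, H (of ℤ F g) = φ g :=
  ⟨(MonoidAlgebra.basis F ℤ).constr ℤ φ, fun g ↦ by
    rw [MonoidAlgebra.of_apply, ← MonoidAlgebra.basis_apply, Module.Basis.constr_basis]⟩

theorem of_inv_mul_of (g : F) : of ℤ F g⁻¹ * of ℤ F g = 1 := by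
  rw [← map_mul, inv_mul_cancel, map_one]

theorem of_mul_of_inv (g : F) : of ℤ F g * of ℤ F g⁻¹ = 1 := by
  rw [← map_mul, mul_inv_cancel, map_one]

variable {N} in
theorem of_sub_one_mem_augI {n : F} (hn : n ∈ N) : of ℤ F n - 1 ∈ augI N := by
  rw [← mul_one (of ℤ F n - 1)]
  exact Submodule.mul_mem_mul (Submodule.subset_span ⟨n, hn, rfl⟩) Submodule.mem_top

theorem augI_mul_top : augI N * ⊤ = augI N := by
  have htop : (⊤ : Submodule ℤ (MonoidAlgebra ℤ F)) * ⊤ = ⊤ :=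
    top_le_iff.mp (le_mul_of_one_le_right' le_top)
  rw [augI, mul_assoc, htop]

theorem augI_eq_span [N.Normal] :
    augI N = span ℤ (Set.range fun p : F × N ↦ of ℤ F p.1 * (of ℤ F p.2 - 1)) := by
  rw [augI, aug, top_eq_span_range_of, Submodule.span_mul_span]
  congr 1
  ext x
  simp only [Set.mem_mul, Set.mem_range, Prod.exists]
  constructor
  · rintro ⟨_, ⟨n, hn, rfl⟩, _, ⟨v, rfl⟩, rfl⟩
    refine ⟨v, (MulAut.conjNormal v).symm ⟨n, hn⟩, ?_⟩
    simp [mul_sub, sub_mul, mul_assoc]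
  · rintro ⟨v, n, rfl⟩
    refine ⟨_, ⟨_, (MulAut.conjNormal v n).2, rfl⟩, _, ⟨v, rfl⟩, ?_⟩
    simp [mul_sub, sub_mul]

theorem top_mul_augI_le [N.Normal] : ⊤ * augI N ≤ augI N := by
  rw [augI_eq_span, top_eq_span_range_of, Submodule.span_mul_span, Submodule.span_le]
  rintro _ ⟨_, ⟨u, rfl⟩, _, ⟨p, rfl⟩, rfl⟩
  refine Submodule.subset_span ⟨(u * p.1, p.2), ?_⟩
  simp only [map_mul, mul_assoc]

theorem augI_top_eq_span :
    augI (⊤ : Subgroup F) = span ℤ (Set.range fun w ↦ of ℤ F w - 1) := by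
  refine le_antisymm ?_ (Submodule.span_le.mpr ?_)
  · rw [augI_eq_span, Submodule.span_le]
    rintro _ ⟨⟨v, w⟩, rfl⟩
    have hdiff : of ℤ F v * (of ℤ F w - 1) = (of ℤ F (v * w) - 1) - (of ℤ F v - 1) := by
      rw [map_mul]; noncomm_ring
    simp only [SetLike.mem_coe, hdiff]
    exact Submodule.sub_mem _ (Submodule.subset_span ⟨_, rfl⟩) (Submodule.subset_span ⟨_, rfl⟩)
  · rintro _ ⟨w, rfl⟩
    exact of_sub_one_mem_augI (Subgroup.mem_top w)

theorem augI_mul_augI_top_eq_span [N.Normal] :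
    augI N * augI ⊤ = span ℤ (Set.range fun p : (F × N) × F ↦
      of ℤ F p.1.1 * (of ℤ F p.1.2 - 1) * (of ℤ F p.2 - 1)) := by
  rw [augI_eq_span, augI_top_eq_span, Submodule.span_mul_span, ← Set.image2_mul,
    Set.image2_range]

theorem augI_top_mul_span_le_ker {A : Type*} [AddCommGroup A] {H : MonoidAlgebra ℤ F →ₗ[ℤ] A}
    {S : Set (MonoidAlgebra ℤ F)} (hH : ∀ g, ∀ x ∈ S, H (of ℤ F g * x) = H x) :
    augI ⊤ * span ℤ S ≤ LinearMap.ker H := by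
  rw [augI_top_eq_span, Submodule.span_mul_span, Submodule.span_le]
  rintro _ ⟨_, ⟨g, rfl⟩, x, hx, rfl⟩
  simp only [SetLike.mem_coe, LinearMap.mem_ker, sub_mul, one_mul, map_sub, hH g x hx, sub_self]

variable {N}

theorem mem_of_of_sub_one_mem_augI [N.Normal] {a : F} (ha : of ℤ F a - 1 ∈ augI N) : a ∈ N := by
  let π : MonoidAlgebra ℤ F →ₐ[ℤ] MonoidAlgebra ℤ (F ⧸ N) :=
    MonoidAlgebra.lift ℤ _ F ((of ℤ (F ⧸ N)).comp (QuotientGroup.mk' N))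
  have hπ (g : F) : π (of ℤ F g) = of ℤ (F ⧸ N) g := MonoidAlgebra.lift_of _ _
  have hker : augI N ≤ LinearMap.ker π.toLinearMap := by
    rw [augI_eq_span, Submodule.span_le]
    rintro _ ⟨⟨v, n⟩, rfl⟩
    simp only [SetLike.mem_coe, LinearMap.mem_ker, AlgHom.toLinearMap_apply, map_mul, map_sub,
      hπ, map_one, (QuotientGroup.eq_one_iff (n : F)).mpr n.2, sub_self, mul_zero]
  have hone : of ℤ (F ⧸ N) a = of ℤ (F ⧸ N) 1 := by
    rw [map_one, ← hπ, ← sub_eq_zero, ← map_one π, ← map_sub]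
    exact hker ha
  exact (QuotientGroup.eq_one_iff a).mp (MonoidAlgebra.of_injective hone)

theorem mem_commutator_of_of_sub_one_mem [N.Normal] {a : N}
    (ha : of ℤ F a - 1 ∈ augI ⊤ * augI N) : a ∈ commutator N := by
  obtain ⟨ρ, hρ⟩ := exists_retraction_mul_right N
  obtain ⟨L, hL⟩ := exists_linearMap_of fun v ↦ Additive.ofMul (Abelianization.of (ρ v))
  have hdiff (v : F) (m : N) :
      L (of ℤ F v * (of ℤ F m - 1)) = Additive.ofMul (Abelianization.of m) := by
    rw [mul_sub, mul_one, ← map_mul, map_sub, hL, hL, hρ, map_mul, ofMul_mul, add_sub_cancel_left]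
  have hker : augI ⊤ * augI N ≤ LinearMap.ker L := by
    rw [augI_eq_span N]
    refine augI_top_mul_span_le_ker ?_
    rintro g _ ⟨⟨v, m⟩, rfl⟩
    rw [← mul_assoc, ← map_mul, hdiff, hdiff]
  have hzero : Additive.ofMul (Abelianization.of a) = 0 := by
    rw [← hdiff 1 a, map_one, one_mul]
    exact hker ha
  rwa [ofMul_eq_zero, ← MonoidHom.mem_ker, Abelianization.ker_of] at hzero

theorem exists_linearMap_eq_of_crossed [IsFreeGroup F] [N.Normal] {A : Type*} [AddCommGroup A]
    (κ : N → F → A) (hmul : ∀ m n w, κ (m * n) w = κ m w + κ n w)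
    (hcross : ∀ m v w, κ m (v * w) = κ m v + κ ((MulAut.conjNormal v).symm m) w) :
    ∃ H : MonoidAlgebra ℤ F →ₗ[ℤ] A, augI ⊤ * augI N * augI ⊤ ≤ LinearMap.ker H ∧
      ∀ (m : N) w, H ((of ℤ F m - 1) * (of ℤ F w - 1)) = κ m w := by
  obtain ⟨h, hh⟩ := exists_second_difference_eq κ hmul hcross
  obtain ⟨H, hH⟩ := exists_linearMap_of h
  have hdiff (v : F) (m : N) (w : F) :
      H (of ℤ F v * (of ℤ F m - 1) * (of ℤ F w - 1)) = κ m w := by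
    have hexpand : of ℤ F v * (of ℤ F m - 1) * (of ℤ F w - 1) =
        of ℤ F (v * m * w) - of ℤ F (v * m) - of ℤ F (v * w) + of ℤ F v := by
      simp only [map_mul]; noncomm_ring
    rw [hexpand, map_add, map_sub, map_sub, hH, hH, hH, hH, hh]
  refine ⟨H, ?_, fun m w ↦ by simpa only [map_one, one_mul] using hdiff 1 m w⟩
  rw [mul_assoc, augI_mul_augI_top_eq_span]
  refine augI_top_mul_span_le_ker ?_
  rintro g _ ⟨⟨⟨v, m⟩, w⟩, rfl⟩
  rw [← mul_assoc, ← mul_assoc, ← map_mul, hdiff, hdiff]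

end AugmentationIdeals

section StohrIdeal

variable {F : Type} [Group F] (R : Subgroup F)

/-- The ideal `𝐫𝐫𝐟 + 𝐟𝐫𝐫` of Stöhr's theorem. It is only recorded as an additive subgroup of
`ℤ[F]`, which is all that is needed to form the quotient group. -/
noncomputable def stohrIdeal : Submodule ℤ (MonoidAlgebra ℤ F) :=
  augI R * augI R * augI ⊤ + augI ⊤ * augI R * augI R

variable {R}

theorem of_mul_mul_of_sub_mem_stohrIdeal {x : MonoidAlgebra ℤ F} (hx : x ∈ augI R * augI R)
    (u w : F) : of ℤ F u * x * of ℤ F w - x ∈ stohrIdeal R := by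
  have hxw : x * of ℤ F w ∈ augI R * augI R := by
    rw [← augI_mul_top R, ← mul_assoc, augI_mul_top R]
    exact Submodule.mul_mem_mul hx Submodule.mem_top
  have hsplit : of ℤ F u * x * of ℤ F w - x =
      x * (of ℤ F w - 1) + (of ℤ F u - 1) * (x * of ℤ F w) := by noncomm_ring
  rw [hsplit, stohrIdeal, mul_assoc (augI (⊤ : Subgroup F))]
  exact Submodule.add_mem_sup
    (Submodule.mul_mem_mul hx (of_sub_one_mem_augI (Subgroup.mem_top w)))
    (Submodule.mul_mem_mul (of_sub_one_mem_augI (Subgroup.mem_top u)) hxw)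

theorem mkQ_of_mul_mul_of {x : MonoidAlgebra ℤ F} (hx : x ∈ augI R * augI R) (u w : F) :
    (stohrIdeal R).mkQ (of ℤ F u * x * of ℤ F w) = (stohrIdeal R).mkQ x :=
  (Submodule.Quotient.eq _).mpr (of_mul_mul_of_sub_mem_stohrIdeal hx u w)

theorem of_sub_one_mul_of_sub_one_mem (m n : R) :
    (of ℤ F m - 1) * (of ℤ F n - 1) ∈ augI R * augI R :=
  Submodule.mul_mem_mul (of_sub_one_mem_augI m.2) (of_sub_one_mem_augI n.2)

theorem mkQ_of_mul_sub_of_conj (m n : R) (w : F) :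
    (stohrIdeal R).mkQ (of ℤ F ↑(m * n) - of ℤ F (w⁻¹ * ↑(m * n) * w)) =
      (stohrIdeal R).mkQ (of ℤ F m - of ℤ F (w⁻¹ * m * w)) +
        (stohrIdeal R).mkQ (of ℤ F n - of ℤ F (w⁻¹ * n * w)) := by
  have hexpand : of ℤ F ↑(m * n) - of ℤ F (w⁻¹ * ↑(m * n) * w) =
      (of ℤ F m - of ℤ F (w⁻¹ * m * w)) + (of ℤ F n - of ℤ F (w⁻¹ * n * w)) +
        ((of ℤ F m - 1) * (of ℤ F n - 1) -
          of ℤ F w⁻¹ * ((of ℤ F m - 1) * (of ℤ F n - 1)) * of ℤ F w) := by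
    simp only [Subgroup.coe_mul, map_mul, mul_sub, sub_mul, mul_one, one_mul, mul_assoc,
      of_inv_mul_of]
    abel
  simp only [hexpand, map_add]
  rw [map_sub _ (_ * _), mkQ_of_mul_mul_of (of_sub_one_mul_of_sub_one_mem m n), sub_self,
    add_zero]

theorem exists_linearMap_flip [IsFreeGroup F] [R.Normal] :
    ∃ H : MonoidAlgebra ℤ F →ₗ[ℤ] MonoidAlgebra ℤ F ⧸ stohrIdeal R,
      augI ⊤ * augI R * augI ⊤ ≤ LinearMap.ker H ∧
      ∀ m n : R, H ((of ℤ F m - 1) * (of ℤ F n - 1)) = (stohrIdeal R).mkQ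
        ((of ℤ F n - 1) * (of ℤ F m - 1) - (of ℤ F m - 1) * (of ℤ F n - 1)) := by
  let κ (m : R) (w : F) := (stohrIdeal R).mkQ (of ℤ F m - of ℤ F (w⁻¹ * m * w))
  have hcross (m : R) (v w : F) :
      κ m (v * w) = κ m v + κ ((MulAut.conjNormal v).symm m) w := by
    simp only [κ, ← map_add, MulAut.conjNormal_symm_apply, sub_add_sub_cancel, mul_inv_rev,
      mul_assoc]
  obtain ⟨H, hker, hH⟩ := exists_linearMap_eq_of_crossed κ mkQ_of_mul_sub_of_conj hcross
  refine ⟨H, hker, fun m n ↦ ?_⟩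
  have hconj : of ℤ F m - of ℤ F ((n : F)⁻¹ * m * n) = of ℤ F (n : F)⁻¹ *
      ((of ℤ F n - 1) * (of ℤ F m - 1) - (of ℤ F m - 1) * (of ℤ F n - 1)) * of ℤ F 1 := by
    simp only [map_mul, map_one, mul_sub, sub_mul, mul_one, one_mul, ← mul_assoc, of_inv_mul_of]
    abel
  rw [hH, ← mkQ_of_mul_mul_of (Submodule.sub_mem _ (of_sub_one_mul_of_sub_one_mem n m)
    (of_sub_one_mul_of_sub_one_mem m n)) (n : F)⁻¹ 1, ← hconj]

theorem mkQ_inv_sub_one_mul_inv_sub_one (m n : R) :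
    (stohrIdeal R).mkQ ((of ℤ F (n : F)⁻¹ - 1) * (of ℤ F (m : F)⁻¹ - 1)) =
      (stohrIdeal R).mkQ ((of ℤ F n - 1) * (of ℤ F m - 1)) := by
  have hn : of ℤ F (n : F)⁻¹ * (of ℤ F n - 1) = 1 - of ℤ F (n : F)⁻¹ := by
    rw [mul_sub, of_inv_mul_of, mul_one]
  have hm : (of ℤ F m - 1) * of ℤ F (m : F)⁻¹ = 1 - of ℤ F (m : F)⁻¹ := by
    rw [sub_mul, of_mul_of_inv, one_mul]
  rw [← mkQ_of_mul_mul_of (of_sub_one_mul_of_sub_one_mem n m) (n : F)⁻¹ (m : F)⁻¹]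
  congr 1
  rw [← mul_assoc, hn, mul_assoc, hm]
  noncomm_ring

theorem of_sub_of_inv_mem_stohrIdeal [IsFreeGroup F] [R.Normal] {a : R}
    (hcomm : a ∈ commutator R) (ha : of ℤ F a - 1 ∈ augI ⊤ * augI R * augI ⊤) :
    of ℤ F a - of ℤ F (a : F)⁻¹ ∈ stohrIdeal R := by
  obtain ⟨H, hker, hflip⟩ := exists_linearMap_flip (R := R)
  let χ (n : R) := H (of ℤ F n - 1) + (stohrIdeal R).mkQ (of ℤ F n - of ℤ F (n : F)⁻¹)
  have hχ (m n : R) : χ (m * n) = χ m + χ n := by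
    have hprod : of ℤ F ↑(m * n) - 1 =
        (of ℤ F m - 1) * (of ℤ F n - 1) + (of ℤ F m - 1) + (of ℤ F n - 1) := by
      rw [Subgroup.coe_mul, map_mul]; noncomm_ring
    have hinv : of ℤ F ↑(m * n) - of ℤ F (↑(m * n) : F)⁻¹ =
        (of ℤ F m - 1) * (of ℤ F n - 1) -
          (of ℤ F (n : F)⁻¹ - 1) * (of ℤ F (m : F)⁻¹ - 1) +
          (of ℤ F m - of ℤ F (m : F)⁻¹) + (of ℤ F n - of ℤ F (n : F)⁻¹) := by
      rw [Subgroup.coe_mul, mul_inv_rev, map_mul, map_mul]; noncomm_ring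
    simp only [χ, hprod, hinv, map_add, hflip, map_sub _ (_ * _), mkQ_inv_sub_one_mul_inv_sub_one]
    abel
  let χHom : R →* Multiplicative (MonoidAlgebra ℤ F ⧸ stohrIdeal R) :=
    MonoidHom.mk' (fun n ↦ .ofAdd (χ n)) fun m n ↦ congrArg Multiplicative.ofAdd (hχ m n)
  have hzero : χ a = 0 := Abelianization.commutator_subset_ker χHom hcomm
  have hHa : H (of ℤ F a - 1) = 0 := hker ha
  simp only [χ, hHa, zero_add] at hzero
  exact (Submodule.Quotient.mk_eq_zero _).mp hzero

theorem sq_sub_one_mem_stohrIdeal [R.Normal] {a : F} (hr : of ℤ F a - 1 ∈ augI R)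
    (hrf : of ℤ F a - 1 ∈ augI R * augI ⊤) (hinv : of ℤ F a - of ℤ F a⁻¹ ∈ stohrIdeal R) :
    of ℤ F (a ^ 2) - 1 ∈ stohrIdeal R := by
  have hsplit : of ℤ F (a ^ 2) - 1 =
      (of ℤ F a - of ℤ F a⁻¹) + (of ℤ F a - 1) * ((1 + of ℤ F a⁻¹) * (of ℤ F a - 1)) := by
    simp only [pow_two, map_mul, mul_sub, sub_mul, mul_add, add_mul, mul_one, one_mul,
      of_inv_mul_of, of_mul_of_inv]
    abel
  have hleft : (1 + of ℤ F a⁻¹) * (of ℤ F a - 1) ∈ augI R * augI ⊤ := by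
    refine mul_le_mul_left (top_mul_augI_le R) (augI ⊤) ?_
    rw [mul_assoc]
    exact Submodule.mul_mem_mul Submodule.mem_top hrf
  rw [hsplit]
  refine Submodule.add_mem _ hinv (Submodule.mem_sup_left ?_)
  rw [mul_assoc]
  exact Submodule.mul_mem_mul hr hleft

end StohrIdeal

end Stohr

/-- Theorem 5.1, Stöhr: if `a ∈ D(F, 𝐟𝐫𝐟)` then `a² ∈ D(F, 𝐫𝐫𝐟 + 𝐟𝐫𝐫)`. -/
theorem stohr_square (F : Type) [Group F] [IsFreeGroup F]
    (R : Subgroup F) [R.Normal] (a : F)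
    (ha : (MonoidAlgebra.of ℤ F a) - 1 ∈
      augI (⊤ : Subgroup F) * augI R * augI (⊤ : Subgroup F)) :
    (MonoidAlgebra.of ℤ F (a ^ 2)) - 1 ∈
      augI R * augI R * augI (⊤ : Subgroup F) +
        augI (⊤ : Subgroup F) * augI R * augI R := by
  have hfr_le : augI ⊤ * augI R ≤ augI R :=
    (mul_le_mul_left le_top _).trans (Stohr.top_mul_augI_le R)
  have hrf_le : augI R * augI ⊤ ≤ augI R :=
    (mul_le_mul_right le_top _).trans (Stohr.augI_mul_top R).le
  have hrf : MonoidAlgebra.of ℤ F a - 1 ∈ augI R * augI ⊤ := mul_le_mul_left hfr_le _ ha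
  have hr : MonoidAlgebra.of ℤ F a - 1 ∈ augI R := hrf_le hrf
  have hfr : MonoidAlgebra.of ℤ F a - 1 ∈ augI ⊤ * augI R :=
    mul_le_mul_right hrf_le (augI ⊤) (by rwa [← mul_assoc])
  lift a to R using Stohr.mem_of_of_sub_one_mem_augI hr
  exact Stohr.sq_sub_one_mem_stohrIdeal hr hrf
    (Stohr.of_sub_of_inv_mem_stohrIdeal (Stohr.mem_commutator_of_of_sub_one_mem hfr) ha)
end

section
/- Let F be a free group and R, S, T normal subgroups of F with R ⊆ S and R ⊆ T, and let 𝐫, 𝐬, 𝐭 be the two-sided ideals of ℤ[F] generated by the augmentation ideals of R, S, T. If a ∈ D(F, 𝐬𝐫𝐭 + 𝐭𝐫𝐬), then a⁴ ∈ [R, R, ST], where [R, R, ST] = [[R,R], ST] and ST is the (normal) subgroup generated by S and T. -/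
/-! Put `H = ST`. The hypothesis places `a - 1` in `𝐡𝐫𝐡`, so every function on `H` whose
increments along `R` split in the sense of `HasSplitIncrements` takes equal values at `a` and at
`1`, and it remains to find enough such functions on a free group. A retraction `κ : H → R` along a
transversal, read modulo `[R, R]`, shows that `a ∈ [R, R]`.

The commutator pairing `b(r, s) = [r, s]` on `R`, with values modulo `[R, R, H]`, is
bimultiplicative, alternating and invariant under conjugation. Prescribing the increments along a
basis of `H` yields `Q` with `Q(gr) = Q(g) + Q(r) + b(κ(g), r)`, and the same construction
transported by `g ↦ g⁻¹` yields `P` with `P(gr) = P(grg⁻¹) + P(g) + b(κ(g), r)`. The pairing cancels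
in `φ = P - Q`, which thus has split increments, but `φ(rs) = φ(r) + φ(s) - 2b(r, s)` on `R`.
Hence `φ` sends `x ∈ [R, R]` to `-4` times its class modulo `[R, R, H]`, and `φ(a) = φ(1) = 0` is
the assertion. -/

section GroupRing

variable {F : Type} [Group F]

theorem augI_mono {M N : Subgroup F} (h : M ≤ N) : augI M ≤ augI N :=
  mul_le_mul' (Submodule.span_mono fun _ ⟨n, hn, hx⟩ => ⟨n, h hn, hx⟩) le_rfl

theorem augI_eq_span (N : Subgroup F) :
    augI N = Submodule.span ℤ
      {x | ∃ n ∈ N, ∃ g, x = (MonoidAlgebra.of ℤ F n - 1) * MonoidAlgebra.of ℤ F g} := by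
  rw [augI, aug, ← (MonoidAlgebra.basis F ℤ).span_eq, Submodule.span_mul_span]
  congr 1
  ext x
  constructor
  · rintro ⟨_, ⟨n, hn, rfl⟩, _, ⟨g, rfl⟩, rfl⟩
    exact ⟨n, hn, g, rfl⟩
  · rintro ⟨n, hn, g, rfl⟩
    exact ⟨_, ⟨n, hn, rfl⟩, _, ⟨g, rfl⟩, rfl⟩

theorem mapDomainAlgHom_of {G : Type*} [Group G] (f : F →* G) (g : F) :
    MonoidAlgebra.mapDomainAlgHom ℤ ℤ f (MonoidAlgebra.of ℤ F g) = MonoidAlgebra.of ℤ G (f g) := by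
  simp

theorem map_mk'_augI (R : Subgroup F) [R.Normal] :
    (augI R).map (MonoidAlgebra.mapDomainAlgHom ℤ ℤ (QuotientGroup.mk' R)).toLinearMap = ⊥ := by
  rw [augI_eq_span, Submodule.map_span, Submodule.span_eq_bot]
  rintro _ ⟨_, ⟨r, hr, g, rfl⟩, rfl⟩
  have hr' : QuotientGroup.mk' R r = 1 := (QuotientGroup.eq_one_iff r).mpr hr
  rw [AlgHom.toLinearMap_apply, map_mul, map_sub, map_one, mapDomainAlgHom_of, hr', map_one,
    sub_self, zero_mul]

theorem mem_of_of_sub_one_mem_mul_augI_mul {R : Subgroup F} [R.Normal]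
    {I J : Submodule ℤ (MonoidAlgebra ℤ F)} {a : F}
    (ha : MonoidAlgebra.of ℤ F a - 1 ∈ I * augI R * J) : a ∈ R := by
  have h := Submodule.mem_map_of_mem
    (f := (MonoidAlgebra.mapDomainAlgHom ℤ ℤ (QuotientGroup.mk' R)).toLinearMap) ha
  rw [Submodule.map_mul, Submodule.map_mul, map_mk'_augI, Submodule.mul_bot, Submodule.bot_mul,
    Submodule.mem_bot, AlgHom.toLinearMap_apply, map_sub, map_one, mapDomainAlgHom_of, sub_eq_zero,
    ← map_one (MonoidAlgebra.of ℤ (F ⧸ R))] at h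
  exact (QuotientGroup.eq_one_iff a).mp (MonoidAlgebra.of_injective h)

theorem augI_mul_augI_mul_augI_le_span (S R T : Subgroup F) [R.Normal] [T.Normal] :
    augI S * augI R * augI T ≤ Submodule.span ℤ
      {x | ∃ s ∈ S, ∃ r ∈ R, ∃ t ∈ T, ∃ g, x =
        (MonoidAlgebra.of ℤ F s - 1) * (MonoidAlgebra.of ℤ F r - 1) *
          (MonoidAlgebra.of ℤ F t - 1) * MonoidAlgebra.of ℤ F g} := by
  simp only [augI_eq_span, Submodule.span_mul_span]
  refine Submodule.span_mono ?_
  rintro _ ⟨_, ⟨_, ⟨s, hs, x, rfl⟩, _, ⟨r, hr, y, rfl⟩, rfl⟩, _, ⟨t, ht, z, rfl⟩, rfl⟩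
  refine ⟨s, hs, x * r * x⁻¹, ‹R.Normal›.conj_mem r hr x, x * y * t * (x * y)⁻¹,
    ‹T.Normal›.conj_mem t ht (x * y), x * y * z, ?_⟩
  simp only [sub_mul, mul_sub, one_mul, ← map_mul, mul_assoc, mul_inv_rev, inv_mul_cancel_left,
    mul_one]

end GroupRing

section SplitIncrements

variable {G V : Type*} [Group G] [AddCommGroup V]

/-- A function `φ` on `G` has split increments along `R` when `φ (g * r) - φ g` is the sum of a
function of the conjugate `g * r * g⁻¹` and a function of `r`. The linear extension to `ℤ[G]` of
such a function vanishes on `Δ(G) Δ(R) Δ(G)`. -/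
def HasSplitIncrements (R : Subgroup G) (φ : G → V) : Prop :=
  ∃ α β : G → V, ∀ g, ∀ r ∈ R, φ (g * r) = φ g + α (g * r * g⁻¹) + β r

theorem HasSplitIncrements.third_difference_eq_zero {R : Subgroup G} [R.Normal] {φ : G → V}
    (hφ : HasSplitIncrements R φ) (s t g : G) {r : G} (hr : r ∈ R) :
    (φ (s * r * t * g) - φ (s * t * g)) - (φ (s * r * g) - φ (s * g)) -
      ((φ (r * t * g) - φ (t * g)) - (φ (r * g) - φ g)) = 0 := by
  obtain ⟨α, β, h⟩ := hφ
  have increment (x y : G) :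
      φ (x * r * y) = φ (x * y) + α (x * r * x⁻¹) + β (y⁻¹ * r * y) := by
    have hy : y⁻¹ * r * y ∈ R := ‹R.Normal›.conj_mem' r hr y
    rw [show x * r * y = x * y * (y⁻¹ * r * y) by group, h _ _ hy]
    congr 3
    group
  have increment_one (y : G) : φ (r * y) = φ y + α r + β (y⁻¹ * r * y) := by
    simpa only [one_mul, mul_one, inv_one] using increment 1 y
  rw [mul_assoc (s * r), mul_assoc s t, mul_assoc r t, increment, increment, increment_one,
    increment_one]
  abel

theorem HasSplitIncrements.apply_eq_apply_one {F : Type} [Group F] {R H : Subgroup F}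
    [R.Normal] [H.Normal] (hRH : R ≤ H) {φ : H → V}
    (hφ : HasSplitIncrements (R.subgroupOf H) φ) {a : H}
    (ha : MonoidAlgebra.of ℤ F a - 1 ∈ augI H * augI R * augI H) : φ a = φ 1 := by
  let f : F → V := Function.extend Subtype.val φ fun _ => 0
  have f_coe (h : H) : f h = φ h := Subtype.val_injective.extend_apply φ _ h
  have f_of_notMem (g : F) (hg : g ∉ H) : f g = 0 :=
    Function.extend_apply' φ _ g fun ⟨h, hh⟩ => hg (hh ▸ h.2)
  let L : MonoidAlgebra ℤ F →ₗ[ℤ] V := (MonoidAlgebra.basis F ℤ).constr ℤ f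
  have L_of (g : F) : L (MonoidAlgebra.of ℤ F g) = f g := by
    simpa using (MonoidAlgebra.basis F ℤ).constr_basis ℤ f g
  have le_ker : augI H * augI R * augI H ≤ LinearMap.ker L := by
    refine (augI_mul_augI_mul_augI_le_span H R H).trans (Submodule.span_le.mpr ?_)
    rintro _ ⟨s, hs, r, hr, t, ht, g, rfl⟩
    simp only [SetLike.mem_coe, LinearMap.mem_ker, sub_mul, mul_sub, one_mul, mul_one, ← map_mul,
      map_sub, L_of]
    have hr' := hRH hr
    by_cases hg : g ∈ H
    · lift s to H using hs
      lift t to H using ht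
      lift g to H using hg
      lift r to H using hr'
      simp only [← Subgroup.coe_mul, f_coe]
      rw [← hφ.third_difference_eq_zero s t g (Subgroup.mem_subgroupOf.mpr hr)]
      abel
    · have f_mul (h : F) (hh : h ∈ H) : f (h * g) = 0 :=
        f_of_notMem _ fun hmem => hg ((H.mul_mem_cancel_left hh).mp hmem)
      simp only [f_of_notMem g hg, f_mul, f_mul _ (mul_mem (mul_mem hs hr') ht), mul_mem, hs, hr',
        ht, sub_zero]
  have h := le_ker ha
  rwa [LinearMap.mem_ker, ← map_one (MonoidAlgebra.of ℤ F), map_sub, sub_eq_zero, L_of, L_of,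
    f_coe, ← Subgroup.coe_one, f_coe] at h

end SplitIncrements

section Pairing

open Subgroup Additive
open scoped commutatorElement IsMulCommutative

variable {P E V : Type*} [Group P] [Group E] [AddCommGroup V]

theorem pairing_swap_eq_neg {A : Type*} [AddGroup A] {b : A →+ A →+ V} (hb : ∀ m, b m m = 0)
    (m n : A) : b n m = -b m n := by
  have h := hb (m + n)
  simp only [map_add, AddMonoidHom.add_apply, hb, zero_add, add_zero] at h
  exact eq_neg_of_add_eq_zero_left h

theorem eq_neg_four_nsmul_of_mem_commutator {b : Additive P →+ Additive P →+ V}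
    (hb : ∀ m, b m m = 0) {lam : P → V}
    (hlam : ∀ r s, lam (r * s) = lam r + lam s - 2 • b (ofMul r) (ofMul s))
    (θ : Additive (commutator P) →+ V)
    (hθ : ∀ r s, θ (ofMul ⟨⁅r, s⁆, commutator_mem_commutator (mem_top r) (mem_top s)⟩) =
      b (ofMul r) (ofMul s)) (x : commutator P) :
    lam x = -(4 • θ (ofMul x)) := by
  have lam_mul {y : P} (hy : y ∈ commutator P) (r : P) : lam (y * r) = lam y + lam r := by
    have : b (ofMul y) = 0 :=
      Abelianization.commutator_subset_ker (AddMonoidHom.toMultiplicativeRight b) hy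
    rw [hlam, this, AddMonoidHom.zero_apply, smul_zero, sub_zero]
  have lam_commutator (r s : P) : lam ⁅r, s⁆ = -(4 • b (ofMul r) (ofMul s)) := by
    have h := lam_mul (commutator_mem_commutator (mem_top r) (mem_top s)) (s * r)
    rw [show ⁅r, s⁆ * (s * r) = r * s by group, hlam, hlam, pairing_swap_eq_neg hb (ofMul r)] at h
    rw [← sub_eq_of_eq_add h]
    abel
  let ψ : Additive (commutator P) →+ V :=
    AddMonoidHom.mk' (fun y => lam y.toMul) (fun y z => lam_mul y.toMul.2 z.toMul) + 4 • θ
  suffices h : ∀ y (hy : y ∈ commutator P), ψ (ofMul ⟨y, hy⟩) = 0 from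
    eq_neg_of_add_eq_zero_left (h x x.2)
  intro y hy
  induction hy using closure_induction with
  | mem y hy =>
    obtain ⟨r, -, s, -, rfl⟩ := hy
    change lam ⁅r, s⁆ + 4 • θ _ = 0
    rw [lam_commutator, hθ, neg_add_cancel]
  | one => exact map_zero ψ
  | mul y z hy hz ihy ihz =>
    exact (map_add ψ (ofMul ⟨y, hy⟩) (ofMul ⟨z, hz⟩)).trans (by rw [ihy, ihz, add_zero])
  | inv y hy ih => exact (map_neg ψ (ofMul ⟨y, hy⟩)).trans (neg_eq_zero.mpr ih)

theorem conj_eq_self_of_mem_center {z : E} (hz : z ∈ center E) (g : E) : g * z * g⁻¹ = z := by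
  rw [mem_center_iff.mp hz, mul_inv_cancel_right]

theorem commutatorElement_map_mem_center {f : P →* E} (hf : commutator P ≤ (center E).comap f)
    (r s : P) : ⁅f r, f s⁆ ∈ center E :=
  map_commutatorElement f r s ▸ hf (commutator_mem_commutator (mem_top r) (mem_top s))

/-- The pairing `(r, s) ↦ ⁅f r, f s⁆` induced by a homomorphism `f` that maps `[P, P]` into the
center of its target. Its arguments and values are written additively, so that bimultiplicativity is
expressed by an iterated additive homomorphism. -/
def commutatorPairing (f : P →* E) (hf : commutator P ≤ (center E).comap f) :
    Additive P →+ Additive P →+ Additive (center E) :=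
  AddMonoidHom.mk'
    (fun r => AddMonoidHom.mk'
      (fun s => .ofMul ⟨⁅f r.toMul, f s.toMul⁆, commutatorElement_map_mem_center hf _ _⟩)
      fun s t => by
        refine congrArg Additive.ofMul (Subtype.ext ?_)
        simp only [toMul_add, map_mul, commutatorElement_mul_right_eq_mul_conj, mul_assoc]
        rw [← mul_assoc (f _), conj_eq_self_of_mem_center (commutatorElement_map_mem_center hf _ _)]
        rfl)
    fun r s => by
      refine AddMonoidHom.ext fun t => congrArg Additive.ofMul (Subtype.ext ?_)
      simp only [toMul_add, map_mul, commutatorElement_mul_left_eq_conj_mul,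
        conj_eq_self_of_mem_center (commutatorElement_map_mem_center hf _ _), coe_mul]
      exact mem_center_iff.mp (commutatorElement_map_mem_center hf _ _) _

theorem commutatorPairing_self (f : P →* E) (hf : commutator P ≤ (center E).comap f)
    (r : Additive P) : commutatorPairing f hf r r = 0 :=
  congrArg Additive.ofMul (Subtype.ext (commutatorElement_self _))

end Pairing

section FreeGroup

variable {ι G V : Type*} [Group G] [AddCommGroup V]

theorem closure_range_basis (x : FreeGroupBasis ι G) : Subgroup.closure (Set.range x) = ⊤ := by
  have h := congrArg (Subgroup.map x.repr.symm.toMonoidHom) (FreeGroup.closure_range_of ι)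
  rw [MonoidHom.map_closure, ← Set.range_comp] at h
  exact h.trans (Subgroup.map_top_of_surjective _ x.repr.symm.surjective)

theorem apply_eq_apply_one_of_forall_basis_mul {X : Type*} (x : FreeGroupBasis ι G) {f : G → X}
    (hf : ∀ i g, f (x i * g) = f g) (g : G) : f g = f 1 := by
  have hg : g ∈ Subgroup.closure (Set.range x) := closure_range_basis x ▸ Subgroup.mem_top g
  induction hg using Subgroup.closure_induction_left with
  | one => rfl
  | mul_left _ hy z _ ih =>
    obtain ⟨i, rfl⟩ := hy
    rw [hf, ih]
  | inv_mul_cancel _ hy z _ ih =>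
    obtain ⟨i, rfl⟩ := hy
    rw [← ih, ← hf i, mul_inv_cancel_left]

theorem exists_basis_mul_eq_add (x : FreeGroupBasis ι G) (u : ι → G → V) :
    ∃ Q : G → V, Q 1 = 0 ∧ ∀ i g, Q (x i * g) = u i g + Q g := by
  let L : G →* RegularWreathProduct (Multiplicative V) G :=
    x.lift fun i => ⟨fun y => .ofAdd (u i ((x i)⁻¹ * y)), x i⟩
  have hL (i : ι) : L (x i) = ⟨fun y => .ofAdd (u i ((x i)⁻¹ * y)), x i⟩ :=
    congr_fun (x.lift.symm_apply_apply _) i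
  refine ⟨fun g => ((L g).left g).toAdd, by simp, fun i g => ?_⟩
  simp [hL]

theorem exists_mul_eq_add_of_alternating [IsFreeGroup G] {P : Type*} [AddGroup P]
    {b : P →+ P →+ V} (hb : ∀ m, b m m = 0) (k : G → P) (hk : k 1 = 0) :
    ∃ Q : G → V, ∀ r, (∀ g, b (k (g * r)) = b (k g) + b (k r)) →
      ∀ g, Q (g * r) = Q g + Q r + b (k g) (k r) := by
  let x := IsFreeGroup.basis G
  obtain ⟨Q, hQ₁, hQ⟩ := exists_basis_mul_eq_add x fun i g => b (k (x i * g)) (k g)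
  refine ⟨Q, fun r hr g => ?_⟩
  have hr' (h g : G) : b (k h) (k (g * r)) = b (k h) (k g) + b (k h) (k r) := by
    simp only [pairing_swap_eq_neg hb _ (k h), hr, AddMonoidHom.add_apply, neg_add]
  have h := apply_eq_apply_one_of_forall_basis_mul x
    (f := fun g => Q (g * r) - Q g - b (k g) (k r)) (fun i g => ?_) g
  · simp only [one_mul, hQ₁, hk, map_zero, AddMonoidHom.zero_apply, sub_zero] at h
    rw [← h]
    abel
  · rw [mul_assoc, hQ, hQ, ← mul_assoc, hr, AddMonoidHom.add_apply, hr', hr', hb,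
      pairing_swap_eq_neg hb (k g) (k r)]
    abel

end FreeGroup

section Construction

open Subgroup Additive
open scoped commutatorElement IsMulCommutative

universe u

variable {G : Type u} {V : Type*} [Group G] [AddCommGroup V]

theorem exists_retraction_map_mul_right (R : Subgroup G) :
    ∃ κ : G → R, (∀ r : R, κ r = r) ∧ ∀ g (r : R), κ (g * r) = κ g * r := by
  obtain ⟨S, hS, hS₁⟩ := R.exists_isComplement_left 1
  exact ⟨fun g => (hS.equiv g).2, fun r => hS.equiv_snd_eq_self_of_mem_of_one_mem hS₁ r.2,
    fun g r => congrArg Prod.snd (hS.equiv_mul_right g r)⟩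

theorem exists_hasSplitIncrements_abelianization (R : Subgroup G) :
    ∃ φ : G → Additive (Abelianization R), HasSplitIncrements R φ ∧
      ∀ r : R, φ r = ofMul (Abelianization.of r) := by
  obtain ⟨κ, hκ, hκ_mul⟩ := exists_retraction_map_mul_right R
  let φ (g : G) : Additive (Abelianization R) := ofMul (Abelianization.of (κ g))
  refine ⟨φ, ⟨0, φ, fun g r hr => ?_⟩, fun r => ?_⟩
  · lift r to R using hr
    simp [φ, hκ_mul, hκ]
  · simp only [φ, hκ]

variable [IsFreeGroup G] {R : Subgroup G} {b : Additive R →+ Additive R →+ V} {κ : G → R}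

theorem exists_mul_eq_add_pairing (hb : ∀ m, b m m = 0) (hκ : ∀ r : R, κ r = r)
    (hκ_mul : ∀ g (r : R), κ (g * r) = κ g * r) :
    ∃ Q : G → V, ∀ g (r : R), Q (g * r) = Q g + Q r + b (ofMul (κ g)) (ofMul r) := by
  obtain ⟨Q, hQ⟩ := exists_mul_eq_add_of_alternating hb (fun g => ofMul (κ g))
    (congrArg ofMul (hκ 1))
  refine ⟨Q, fun g r => ?_⟩
  rw [hQ r fun h => by rw [hκ_mul, hκ, ofMul_mul, map_add], hκ]

variable [R.Normal]

theorem exists_mul_eq_conj_add_pairing (hb : ∀ m, b m m = 0)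
    (hb_conj : ∀ (g : G) (r s : R),
      b (ofMul (MulAut.conjNormal g r)) (ofMul (MulAut.conjNormal g s)) = b (ofMul r) (ofMul s))
    (hκ : ∀ r : R, κ r = r) (hκ_mul : ∀ g (r : R), κ (g * r) = κ g * r) :
    ∃ P : G → V, ∀ g (r : R),
      P (g * r) = P (MulAut.conjNormal g r : R) + P g + b (ofMul (κ g)) (ofMul r) := by
  have mul_inv_eq (g : G) (r : R) : (g * r)⁻¹ = g⁻¹ * (MulAut.conjNormal g r⁻¹ : R) := by
    simp [mul_assoc]
  let κ' (g : G) : R := MulAut.conjNormal g⁻¹ (κ g⁻¹)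
  have κ'_inv (g : G) : κ' g⁻¹ = MulAut.conjNormal g (κ g) := by simp only [κ', inv_inv]
  have κ'_coe (r : R) : κ' r = r⁻¹ := by
    simp only [κ', ← InvMemClass.coe_inv, hκ]
    ext
    simp
  have κ'_mul (g : G) (r : R) : κ' (g * r) = r⁻¹ * κ' g := by
    simp only [κ', mul_inv_eq, hκ_mul]
    ext
    simp [mul_assoc]
  obtain ⟨Q, hQ⟩ := exists_mul_eq_add_of_alternating hb (fun g => ofMul (κ' g))
    (congrArg ofMul ((κ'_coe 1).trans inv_one))
  have Q_mul (g : G) (r : R) : Q (g * r) = Q g + Q r + b (ofMul (κ' g)) (ofMul r⁻¹) := by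
    rw [hQ r fun h => by rw [κ'_mul, κ'_coe, ofMul_mul, map_add, add_comm], κ'_coe]
  refine ⟨fun g => Q g⁻¹, fun g r => ?_⟩
  have h := Q_mul g⁻¹ (MulAut.conjNormal g r⁻¹)
  rwa [← mul_inv_eq, κ'_inv, map_inv, inv_inv, hb_conj, InvMemClass.coe_inv,
    add_comm (Q g⁻¹)] at h

theorem exists_hasSplitIncrements_pairing (hb : ∀ m, b m m = 0)
    (hb_conj : ∀ (g : G) (r s : R),
      b (ofMul (MulAut.conjNormal g r)) (ofMul (MulAut.conjNormal g s)) = b (ofMul r) (ofMul s)) :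
    ∃ φ : G → V, HasSplitIncrements R φ ∧
      ∀ r s : R, φ (r * s) = φ r + φ s - 2 • b (ofMul r) (ofMul s) := by
  obtain ⟨κ, hκ, hκ_mul⟩ := exists_retraction_map_mul_right R
  obtain ⟨Q, hQ⟩ := exists_mul_eq_add_pairing hb hκ hκ_mul
  obtain ⟨P, hP⟩ := exists_mul_eq_conj_add_pairing hb hb_conj hκ hκ_mul
  refine ⟨P - Q, ⟨P, -Q, fun g r hr => ?_⟩, fun r s => ?_⟩
  · lift r to R using hr
    simp only [Pi.sub_apply, Pi.neg_apply, hP, hQ, MulAut.conjNormal_apply]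
    abel
  · have P_mul : P (r * s) = P r + P s - b (ofMul r) (ofMul s) := by
      have conj_self : MulAut.conjNormal (s : G) s = s := by
        ext
        simp
      have conj_conj : MulAut.conjNormal (s : G) (MulAut.conjNormal (s : G)⁻¹ r) = r := by
        rw [map_inv, MulAut.apply_inv_self]
      have mul_conj : (s * (MulAut.conjNormal (s : G)⁻¹ r : R) : G) = r * s := by
        simp [mul_assoc]
      rw [← mul_conj, hP, hκ, ← hb_conj s, conj_self, conj_conj, pairing_swap_eq_neg hb (ofMul r),
        sub_eq_add_neg]
    simp only [Pi.sub_apply, P_mul, hQ, hκ]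
    abel

theorem exists_hasSplitIncrements_eq_neg_four_nsmul {E : Type*} [Group E] (f : G →* E)
    (hf : commutator R ≤ (center E).comap (f.comp R.subtype)) :
    ∃ φ : G → Additive (center E), HasSplitIncrements R φ ∧
      ∀ (x : R) (hx : x ∈ commutator R), φ x = -(4 • ofMul ⟨f x, hf hx⟩) := by
  let b := commutatorPairing (f.comp R.subtype) hf
  have b_self (m : Additive R) : b m m = 0 := commutatorPairing_self (f.comp R.subtype) hf m
  have b_conj (g : G) (r s : R) :
      b (ofMul (MulAut.conjNormal g r)) (ofMul (MulAut.conjNormal g s)) =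
        b (ofMul r) (ofMul s) := by
    refine congrArg ofMul (Subtype.ext ?_)
    change ⁅f (MulAut.conjNormal g r : R), f (MulAut.conjNormal g s : R)⁆ = ⁅f r, f s⁆
    simp only [MulAut.conjNormal_apply, map_mul, map_inv, ← conjugate_commutatorElement]
    exact conj_eq_self_of_mem_center (commutatorElement_map_mem_center hf r s) _
  let θ : commutator R →* center E :=
    ((f.comp R.subtype).comp (commutator R).subtype).codRestrict _ fun y => hf y.2
  obtain ⟨φ, hφ, hφ_mul⟩ := exists_hasSplitIncrements_pairing b_self b_conj
  refine ⟨φ, hφ, fun x hx => ?_⟩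
  exact eq_neg_four_nsmul_of_mem_commutator (lam := fun r : R => φ r) b_self hφ_mul θ.toAdditive
    (fun r s => congrArg ofMul (Subtype.ext (map_commutatorElement (f.comp R.subtype) r s))) ⟨x, hx⟩

theorem pow_four_mem_of_forall_hasSplitIncrements {a : G} (ha : a ∈ R)
    (h : ∀ (V : Type u) [AddCommGroup V] (φ : G → V), HasSplitIncrements R φ → φ a = φ 1) :
    a ^ 4 ∈ ⁅⁅R, R⁆, (⊤ : Subgroup G)⁆ := by
  lift a to R using ha
  have a_mem : a ∈ commutator R := by
    obtain ⟨φ, hφ, hφ_coe⟩ := exists_hasSplitIncrements_abelianization R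
    have hφa := h _ φ hφ
    rw [hφ_coe, ← coe_one R, hφ_coe, map_one] at hφa
    rwa [← Abelianization.ker_of, MonoidHom.mem_ker]
  let N : Subgroup G := ⁅⁅R, R⁆, ⊤⁆
  have mk_mem_center :
      commutator R ≤ (center (G ⧸ N)).comap ((QuotientGroup.mk' N).comp R.subtype) := by
    rw [← map_le_iff_le_comap, ← map_map, map_subtype_commutator,
      ← commutator_top_right_eq_bot_iff_le_center,
      ← map_top_of_surjective _ (QuotientGroup.mk'_surjective N), ← map_commutator,
      Subgroup.map_eq_bot_iff, QuotientGroup.ker_mk']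
  obtain ⟨φ, hφ, hφ_coe⟩ :=
    exists_hasSplitIncrements_eq_neg_four_nsmul (QuotientGroup.mk' N) mk_mem_center
  have hφa := h _ φ hφ
  rw [hφ_coe a a_mem, ← coe_one R, hφ_coe 1 (one_mem _)] at hφa
  have h_pow : (a : G ⧸ N) ^ 4 = ((1 : G) : G ⧸ N) ^ 4 :=
    congrArg (fun z : Additive (center (G ⧸ N)) => (z.toMul : G ⧸ N)) (neg_inj.mp hφa)
  rwa [QuotientGroup.mk_one, one_pow, ← QuotientGroup.mk_pow, QuotientGroup.eq_one_iff] at h_pow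

end Construction

theorem stohr_fourth_power_general {F : Type} [Group F] {R H : Subgroup F} [R.Normal] [H.Normal]
    [IsFreeGroup H] (hRH : R ≤ H) {a : F}
    (ha : MonoidAlgebra.of ℤ F a - 1 ∈ augI H * augI R * augI H) : a ^ 4 ∈ ⁅⁅R, R⁆, H⁆ := by
  have haR : a ∈ R := mem_of_of_sub_one_mem_mul_augI_mul ha
  lift a to H using hRH haR
  have h := Subgroup.mem_map_of_mem H.subtype <|
    pow_four_mem_of_forall_hasSplitIncrements (Subgroup.mem_subgroupOf.mpr haR) fun _ _ _ hφ =>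
      hφ.apply_eq_apply_one hRH ha
  rwa [Subgroup.map_commutator, Subgroup.map_commutator, Subgroup.subgroupOf_map_subtype,
    inf_eq_left.mpr hRH, ← MonoidHom.range_eq_map, Subgroup.range_subtype, map_pow] at h

/-- if `R ⊆ S`, `R ⊆ T` and `a ∈ D(F, 𝐬𝐫𝐭 + 𝐭𝐫𝐬)`, then
`a⁴ ∈ [R, R, ST]`. -/
theorem stohr_fourth_power (F : Type) [Group F] [IsFreeGroup F]
    (R S T : Subgroup F) [R.Normal] [S.Normal] [T.Normal]
    (hRS : R ≤ S) (hRT : R ≤ T) (a : F)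
    (ha : (MonoidAlgebra.of ℤ F a) - 1 ∈ augI S * augI R * augI T + augI T * augI R * augI S) :
    a ^ 4 ∈ ⁅⁅R, R⁆, S ⊔ T⁆ := by
  have hS : augI S ≤ augI (S ⊔ T) := augI_mono le_sup_left
  have hT : augI T ≤ augI (S ⊔ T) := augI_mono le_sup_right
  exact stohr_fourth_power_general (hRS.trans le_sup_left) <| sup_le
    (mul_le_mul' (mul_le_mul' hS le_rfl) hT) (mul_le_mul' (mul_le_mul' hT le_rfl) hS) ha
end
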